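/- Let m, p be positive integers with m ≤ p and let d ∈ (0,1]. If r ∈ (0,1) is a root of the equation r^{2(p−m)} − (8+4d) r^{p−m} + 4(1+d)(3+d) r^{2p} + 4 = 0, then r^{p+m} ≤ 1/(3+d). -/

import Mathlib

/-!
With `x = r ^ (p - m)` and `y = r ^ (p + m)` we have `x * y = r ^ (2 * p)`, and completing the
square turns the equation into `(x - 2) ^ 2 + 4 * (1 + d) * x * ((3 + d) * y - 1) = 0`. Since
`r ^ (2 * p) ≥ 0`, every term of the original equation would be nonnegative, and the last one
positive, if `x ≤ 0`. Hence `x > 0`, and the last factor of the completed square is nonpositive.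
-/

section OrderedRing

variable {R : Type*} [CommRing R] [LinearOrder R] [IsStrictOrderedRing R]

theorem pos_of_sq_sub_mul_add_eq_zero {b c x : R} (hb : 0 ≤ b) (hc : 0 < c)
    (h : x ^ 2 - b * x + c = 0) : 0 < x := by
  have hbx : 0 < b * x := by linarith [sq_nonneg x]
  exact pos_of_mul_pos_right hbx hb

theorem mul_le_one_of_sq_sub_add_mul_add_sq_eq_zero {a k s x y : R} (ha : 0 < a) (hx : 0 < x)
    (h : x ^ 2 - (2 * s + a) * x + (a * k * (x * y) + s ^ 2) = 0) : k * y ≤ 1 := by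
  have hsq : a * x * (1 - k * y) = (x - s) ^ 2 := by linear_combination -h
  have hnonneg : 0 ≤ a * x * (1 - k * y) := hsq ▸ sq_nonneg (x - s)
  exact sub_nonneg.mp (nonneg_of_mul_nonneg_right hnonneg (mul_pos ha hx))

end OrderedRing

theorem radius_estimate_r_pmd_general {K : Type*} [Field K] [LinearOrder K]
    [IsStrictOrderedRing K] {m p : ℕ} (hmp : m ≤ p) {d : K} (hd : -1 < d) {r : K}
    (heq : r ^ (2 * (p - m)) - (8 + 4 * d) * r ^ (p - m)
      + 4 * (1 + d) * (3 + d) * r ^ (2 * p) + 4 = 0) :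
    r ^ (p + m) ≤ 1 / (3 + d) := by
  have hd₁ : 0 < 1 + d := by linarith
  have hd₃ : 0 < 3 + d := by linarith
  have hsq : r ^ (2 * (p - m)) = (r ^ (p - m)) ^ 2 := pow_mul' r 2 (p - m)
  have hprod : r ^ (2 * p) = r ^ (p - m) * r ^ (p + m) := by
    rw [← pow_add]
    congr 1
    omega
  have hpos : 0 < r ^ (p - m) := by
    have heven : 0 ≤ r ^ (2 * p) := (even_two_mul p).pow_nonneg r
    refine pos_of_sq_sub_mul_add_eq_zero (b := 8 + 4 * d)
      (c := 4 * (1 + d) * (3 + d) * r ^ (2 * p) + 4) (by linarith) (by positivity) ?_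
    linear_combination heq - hsq
  rw [le_div_iff₀' hd₃]
  refine mul_le_one_of_sq_sub_add_mul_add_sq_eq_zero (a := 4 * (1 + d)) (s := 2)
    (by positivity) hpos ?_
  linear_combination heq - hsq - 4 * (1 + d) * (3 + d) * hprod

/-- Lemma: if `m ≤ p`, `d ∈ (0,1]`, and `r ∈ (0,1)` is a root of
`r^(2(p-m)) - (8+4d) r^(p-m) + 4(1+d)(3+d) r^(2p) + 4 = 0`, then `r^(p+m) ≤ 1/(3+d)`. -/
theorem radius_estimate_r_pmd
    (m p : ℕ) (hm : 0 < m) (hp : 0 < p) (hmp : m ≤ p)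
    (d : ℝ) (hd : d ∈ Set.Ioc (0:ℝ) 1)
    (r : ℝ) (hr : r ∈ Set.Ioo (0:ℝ) 1)
    (heq : r ^ (2 * (p - m)) - (8 + 4 * d) * r ^ (p - m)
      + 4 * (1 + d) * (3 + d) * r ^ (2 * p) + 4 = 0) :
    r ^ (p + m) ≤ 1 / (3 + d) :=
  radius_estimate_r_pmd_general hmp (by linarith [hd.1]) heq
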